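/- arXiv:2005.07997 — 3 statements merged into one kernel-verified Lean document; each statement's English description precedes it below -/
import Mathlib

section
/- Suppose C is a contribution profile with C_i > 0 for all i ∈ N and every agent has at least one acceptable project, and let δ be a Nash distribution for C. Then u_i(δ) > 0 for every i ∈ N, and for every project x ∈ A: Σ_{i∈N} C_i · u_i(x) / u_i(δ) ≤ 1, with equality whenever δ(x) > 0. -/
/-!
The uniform distribution has a positive Nash product, so a Nash distribution `δ` does too, and hence
every utility `U i` is positive.

Write `V = ∑ C i` and move `δ` a fraction `t` of the way towards spending all of `V` on project `x`.
Utilities become `U i * (1 + t * a i)` with `a i = V * u i x / U i - 1`, so optimality of `δ` gives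
`∑ C i * log (1 + t * a i) ≤ 0`. Letting `t → 0⁺` yields `∑ C i * a i ≤ 0`
(`sum_mul_nonpos_of_sum_log_nonpos`), which is `S x := ∑ C i * u i x / U i ≤ 1`.

Finally `∑ δ x * S x = ∑ C i = ∑ δ x`, so the nonnegative numbers `δ x * (1 - S x)` add up to zero
and all vanish; this is the equality case.
-/

open Finset

/-- A distribution of value `V`: nonnegative and sums to `V`. -/
def IsDistribution {A : Type*} [Fintype A] (δ : A → ℝ) (V : ℝ) : Prop :=
  (∀ x, 0 ≤ δ x) ∧ ∑ x, δ x = V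

/-- Agent's (linear) utility of a distribution. -/
def util {A : Type*} [Fintype A] (u : A → ℝ) (δ : A → ℝ) : ℝ :=
  ∑ x, δ x * u x

/-- The Nash product of a distribution (real exponentiation, `0 ^ 0 = 1`). -/
noncomputable def nashProduct {A N : Type*} [Fintype A] [Fintype N]
    (u : N → A → ℝ) (C : N → ℝ) (δ : A → ℝ) : ℝ :=
  ∏ i, (util (u i) δ) ^ (C i)

/-- A Nash distribution for contribution profile `C`: a maximizer of the Nash
product over `Δ(|C|)`. -/
def IsNashDistribution {A N : Type*} [Fintype A] [Fintype N]
    (u : N → A → ℝ) (C : N → ℝ) (δ : A → ℝ) : Prop :=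
  IsDistribution δ (∑ i, C i) ∧
    ∀ δ' : A → ℝ, IsDistribution δ' (∑ i, C i) →
      nashProduct u C δ' ≤ nashProduct u C δ

/-- The one-sided derivative at `t = 0` of `∑ C i * log (1 + t * a i)` is nonpositive if the sum is
nonpositive for `0 < t < 1`; differentiation is replaced by the bound `1 - 1 / y ≤ log y`. -/
lemma sum_mul_nonpos_of_sum_log_nonpos {N : Type*} [Fintype N] (C a : N → ℝ)
    (hC : ∀ i, 0 < C i) (ha : ∀ i, -1 ≤ a i)
    (h : ∀ t : ℝ, 0 < t → t < 1 → ∑ i, C i * Real.log (1 + t * a i) ≤ 0) :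
    ∑ i, C i * a i ≤ 0 := by
  have hcont : ContinuousAt (fun t : ℝ => ∑ i, C i * (a i / (1 + t * a i))) 0 := by
    refine tendsto_finsetSum _ fun i _ => ?_
    have : ContinuousAt (fun t : ℝ => C i * (a i / (1 + t * a i))) 0 := by
      refine continuousAt_const.mul (continuousAt_const.div (by fun_prop) (by simp))
    exact this
  have hlim : Filter.Tendsto (fun t : ℝ => ∑ i, C i * (a i / (1 + t * a i)))
      (nhdsWithin 0 (Set.Ioi 0)) (nhds (∑ i, C i * a i)) := by
    have := hcont.tendsto.mono_left (nhdsWithin_le_nhds (s := Set.Ioi 0))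
    simpa using this
  refine le_of_tendsto hlim ?_
  filter_upwards [Ioo_mem_nhdsGT (show (0 : ℝ) < 1 by norm_num)] with t ht
  have hle : t * ∑ i, C i * (a i / (1 + t * a i)) ≤ 0 := by
    refine le_trans ?_ (h t ht.1 ht.2)
    rw [mul_sum]
    refine sum_le_sum fun i _ => ?_
    have hpos : 0 < 1 + t * a i := by nlinarith [ht.1, ht.2, ha i]
    have hlog := Real.one_sub_inv_le_log_of_pos hpos
    have heq : t * (C i * (a i / (1 + t * a i))) = C i * (1 - (1 + t * a i)⁻¹) := by
      field_simp
      ring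
    rw [heq]
    exact mul_le_mul_of_nonneg_left hlog (hC i).le
  exact nonpos_of_mul_nonpos_right hle ht.1

lemma util_nonneg {A : Type*} [Fintype A] {u δ : A → ℝ} (hu : ∀ x, 0 ≤ u x)
    (hδ : ∀ x, 0 ≤ δ x) : 0 ≤ util u δ :=
  sum_nonneg fun x _ => mul_nonneg (hδ x) (hu x)

lemma util_pos_of_isNashDistribution {A N : Type*} [Fintype A] [Nonempty A] [Fintype N]
    (u : N → A → ℝ) (hu : ∀ i x, 0 ≤ u i x) (C : N → ℝ) (hC : ∀ i, 0 < C i)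
    (hacc : ∀ i, ∃ x, 0 < u i x) (δ : A → ℝ) (hδ : IsNashDistribution u C δ) (i : N) :
    0 < util (u i) δ := by
  have hV : 0 < ∑ i, C i := sum_pos (fun j _ => hC j) ⟨i, mem_univ i⟩
  have hcard : (0 : ℝ) < Fintype.card A := by exact_mod_cast Fintype.card_pos
  have hunif : 0 < nashProduct u C (fun _ => (∑ i, C i) / Fintype.card A) := by
    refine prod_pos fun j _ => Real.rpow_pos_of_pos ?_ _
    obtain ⟨x, hx⟩ := hacc j
    exact sum_pos' (fun y _ => mul_nonneg (by positivity) (hu j y))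
      ⟨x, mem_univ x, mul_pos (by positivity) hx⟩
  have hpos := hunif.trans_le (hδ.2 _ ⟨fun _ => by positivity, by
    simp only [sum_const, card_univ, nsmul_eq_mul]
    field_simp⟩)
  refine (util_nonneg (hu i) hδ.1.1).lt_of_ne fun h0 => hpos.ne' ?_
  refine prod_eq_zero (mem_univ i) ?_
  rw [← h0, Real.zero_rpow (hC i).ne']

/-- The first-order condition in the direction of spending the whole pool on `x`. -/
lemma sum_div_util_le_one {A N : Type*} [Fintype A] [Fintype N]
    (u : N → A → ℝ) (hu : ∀ i x, 0 ≤ u i x) (C : N → ℝ) (hC : ∀ i, 0 < C i)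
    (δ : A → ℝ) (hδ : IsNashDistribution u C δ) (hU : ∀ i, 0 < util (u i) δ) (x : A) :
    ∑ i, C i * u i x / util (u i) δ ≤ 1 := by
  classical
  rcases isEmpty_or_nonempty N with hN | hN
  · simp
  have hV : 0 < ∑ i, C i := sum_pos (fun j _ => hC j) univ_nonempty
  set V := ∑ i, C i with hVdef
  have ha : ∀ i, -1 ≤ V * u i x / util (u i) δ - 1 := fun i => by
    have := div_nonneg (mul_nonneg hV.le (hu i x)) (hU i).le
    linarith
  have key := sum_mul_nonpos_of_sum_log_nonpos C (fun i => V * u i x / util (u i) δ - 1) hC ha ?_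
  · have heq : ∑ i, C i * (V * u i x / util (u i) δ - 1)
        = V * (∑ i, C i * u i x / util (u i) δ) - V := by
      rw [mul_sum]
      nth_rewrite 3 [hVdef]
      rw [← sum_sub_distrib]
      exact sum_congr rfl fun i _ => by ring
    rw [heq] at key
    nlinarith
  · intro t ht0 ht1
    have hfac : ∀ i, 0 < 1 + t * (V * u i x / util (u i) δ - 1) := fun i => by
      nlinarith [ha i]
    have hdist : IsDistribution (fun y => (1 - t) * δ y + t * (if y = x then V else 0)) V := by
      refine ⟨fun y => ?_, ?_⟩
      · have h1 := mul_nonneg (sub_nonneg.2 ht1.le) (hδ.1.1 y)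
        have h2 : 0 ≤ t * (if y = x then V else 0) := by split_ifs <;> positivity
        linarith
      · rw [sum_add_distrib, ← mul_sum, ← mul_sum, hδ.1.2]
        simp only [sum_ite_eq', mem_univ, if_true]
        rw [← hVdef]
        ring
    have hutil : ∀ i, util (u i) (fun y => (1 - t) * δ y + t * (if y = x then V else 0))
        = util (u i) δ * (1 + t * (V * u i x / util (u i) δ - 1)) := fun i => by
      have h1 : util (u i) (fun y => (1 - t) * δ y + t * (if y = x then V else 0))
          = (1 - t) * util (u i) δ + t * (V * u i x) := by
        simp only [util, add_mul, sum_add_distrib, mul_sum, mul_assoc, ite_mul, zero_mul,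
          mul_ite, mul_zero, sum_ite_eq', mem_univ, if_true]
      have := (hU i).ne'
      rw [h1]
      field_simp
      ring
    have hopt := hδ.2 _ hdist
    have hprod : ∏ i, (1 + t * (V * u i x / util (u i) δ - 1)) ^ C i ≤ 1 := by
      have hpos : 0 < nashProduct u C δ := prod_pos fun i _ => Real.rpow_pos_of_pos (hU i) _
      have hmul : nashProduct u C (fun y => (1 - t) * δ y + t * (if y = x then V else 0))
          = nashProduct u C δ * ∏ i, (1 + t * (V * u i x / util (u i) δ - 1)) ^ C i := by
        unfold nashProduct
        rw [← prod_mul_distrib]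
        exact prod_congr rfl fun i _ => by
          rw [hutil i, Real.mul_rpow (hU i).le (hfac i).le]
      rw [hmul] at hopt
      exact le_of_mul_le_mul_left (by simpa using hopt) hpos
    have hlog := Real.log_nonpos
      (prod_nonneg fun i _ => (Real.rpow_pos_of_pos (hfac i) (C i)).le) hprod
    rw [Real.log_prod fun i _ => (Real.rpow_pos_of_pos (hfac i) (C i)).ne'] at hlog
    simpa only [Real.log_rpow (hfac _)] using hlog

theorem nash_first_order_conditions {A N : Type*} [Fintype A] [Nonempty A] [Fintype N]
    (u : N → A → ℝ) (hu : ∀ i x, 0 ≤ u i x)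
    (C : N → ℝ) (hC : ∀ i, 0 < C i)
    (hacc : ∀ i, ∃ x, 0 < u i x)
    (δ : A → ℝ) (hδ : IsNashDistribution u C δ) :
    (∀ i, 0 < util (u i) δ) ∧
      ∀ x, (∑ i, C i * u i x / util (u i) δ) ≤ 1 ∧
        (0 < δ x → (∑ i, C i * u i x / util (u i) δ) = 1) := by
  have hU := util_pos_of_isNashDistribution u hu C hC hacc δ hδ
  have hle := sum_div_util_le_one u hu C hC δ hδ hU
  refine ⟨hU, fun x => ⟨hle x, fun hx => ?_⟩⟩
  have htotal : ∑ y, δ y * (∑ i, C i * u i y / util (u i) δ) = ∑ i, C i := by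
    simp only [mul_sum]
    rw [sum_comm]
    refine sum_congr rfl fun i _ => ?_
    calc ∑ y, δ y * (C i * u i y / util (u i) δ)
        = C i / util (u i) δ * util (u i) δ := by
          conv_rhs => arg 2; unfold util
          rw [mul_sum]
          exact sum_congr rfl fun y _ => by ring
      _ = C i := div_mul_cancel₀ _ (hU i).ne'
  have hzero : ∑ y, δ y * (1 - ∑ i, C i * u i y / util (u i) δ) = 0 := by
    simp only [mul_sub, mul_one, sum_sub_distrib]
    rw [htotal, hδ.1.2, sub_self]
  have hx0 := (sum_eq_zero_iff_of_nonneg fun y _ =>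
    mul_nonneg (hδ.1.1 y) (sub_nonneg.2 (hle y))).1 hzero x (mem_univ x)
  rcases mul_eq_zero.1 hx0 with h | h
  · exact absurd h hx.ne'
  · linarith
end

section
/- Suppose C is a contribution profile with C_i > 0 for all i ∈ N and every agent has at least one acceptable project, and let δ be a Nash distribution for C. Define, for each agent i, the individual distribution δ_i : A → ℝ by δ_i(x) = C_i · δ(x) · u_i(x) / u_i(δ). Then for every i ∈ N: δ_i(x) ≥ 0 for all x, Σ_{x∈A} δ_i(x) = C_i, and δ_i(x) > 0 only if u_i(x) > 0; moreover Σ_{i∈N} δ_i(x) = δ(x) for every x ∈ A. In particular, δ is decomposable. -/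
/-!
The marginal logarithmic Nash welfare of a project `y` at `δ` is
`g y = ∑ i, C i * u i y / util (u i) δ`, and the claim `∑ i, δi i x = δ x` reads
`δ x * g x = δ x`.

All utilities at a Nash distribution are positive, because the uniform distribution has a positive
Nash product (`nash_util_pos`). Optimality against the segment from `δ` to the distribution that
puts the whole pool on `y` gives the first-order condition `g y ≤ 1` (`nash_marginal_le_one`).
On the other hand `∑ x, δ x * g x = ∑ i, C i = ∑ x, δ x`, so the nonnegative numbers
`δ x * (1 - g x)` sum to zero, and hence all vanish.
-/

open Finset

/-- Decomposability of a distribution with respect to utilities `u` and profile `C`. -/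
def Decomposable {A N : Type*} [Fintype A] [Fintype N]
    (u : N → A → ℝ) (C : N → ℝ) (δ : A → ℝ) : Prop :=
  ∃ δi : N → A → ℝ, (∀ i, IsDistribution (δi i) (C i)) ∧
    (∀ x, δ x = ∑ i, δi i x) ∧
    ∀ i x, 0 < δi i x → 0 < u i x

/-- The uniform distribution of a positive pool gives every agent positive utility, so a Nash
distribution has a positive Nash product, which excludes zero factors. -/
lemma nash_util_pos {A N : Type*} [Fintype A] [Nonempty A] [Fintype N]
    {u : N → A → ℝ} (hu : ∀ i x, 0 ≤ u i x)
    {C : N → ℝ} (hC : ∀ i, 0 < C i)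
    (hacc : ∀ i, ∃ x, 0 < u i x)
    {δ : A → ℝ} (hδ : IsNashDistribution u C δ) (i : N) : 0 < util (u i) δ := by
  have hV : 0 < ∑ j, C j := sum_pos (fun j _ => hC j) ⟨i, mem_univ i⟩
  have hA : (0 : ℝ) < Fintype.card A := by exact_mod_cast Fintype.card_pos
  have hunif : IsDistribution (fun _ : A => (∑ j, C j) / Fintype.card A) (∑ j, C j) := by
    refine ⟨fun _ => by positivity, ?_⟩
    simp only [sum_const, card_univ, nsmul_eq_mul]
    field_simp
  have hpos : 0 < nashProduct u C δ := by
    refine lt_of_lt_of_le ?_ (hδ.2 _ hunif)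
    refine prod_pos fun j _ => Real.rpow_pos_of_pos ?_ _
    obtain ⟨x, hx⟩ := hacc j
    exact sum_pos' (fun y _ => mul_nonneg (by positivity) (hu j y))
      ⟨x, mem_univ x, by positivity⟩
  have hnn : 0 ≤ util (u i) δ := sum_nonneg fun x _ => mul_nonneg (hδ.1.1 x) (hu i x)
  refine lt_of_le_of_ne hnn fun h => hpos.ne' ?_
  refine prod_eq_zero (mem_univ i) ?_
  rw [← h, Real.zero_rpow (hC i).ne']

/-- The first-order optimality condition in the direction of a single project `y`. -/
lemma nash_marginal_le_one {A N : Type*} [Fintype A] [Nonempty A] [Fintype N]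
    {u : N → A → ℝ} (hu : ∀ i x, 0 ≤ u i x)
    {C : N → ℝ} (hC : ∀ i, 0 < C i)
    (hacc : ∀ i, ∃ x, 0 < u i x)
    {δ : A → ℝ} (hδ : IsNashDistribution u C δ) (y : A) :
    ∑ i, C i * u i y / util (u i) δ ≤ 1 := by
  classical
  rcases isEmpty_or_nonempty N with hN | hN
  · simp
  have ha := nash_util_pos hu hC hacc hδ
  set V := ∑ i, C i with hVdef
  have hV : 0 < V := sum_pos (fun j _ => hC j) univ_nonempty
  -- `b t i` is the utility of agent `i` at the point `(1 - t) δ + t V e_y` of the segment.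
  let b : ℝ → N → ℝ := fun t i => (1 - t) * util (u i) δ + t * (V * u i y)
  have hb : ∀ t, 0 < t → t < 1 → ∀ i, 0 < b t i := fun t h0 h1 i =>
    add_pos_of_pos_of_nonneg (mul_pos (by linarith) (ha i))
      (mul_nonneg h0.le (mul_nonneg hV.le (hu i y)))
  -- Comparing logarithms through `log r ≤ r - 1` replaces differentiation along the segment.
  have key : ∀ t, 0 < t → t < 1 → ∑ i, C i * ((V * u i y - util (u i) δ) / b t i) ≤ 0 := by
    intro t h0 h1
    have hdist : IsDistribution (fun x => (1 - t) * δ x + t * (if x = y then V else 0)) V := by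
      refine ⟨fun x => add_nonneg (mul_nonneg (by linarith) (hδ.1.1 x))
        (mul_nonneg h0.le (by split_ifs <;> linarith)), ?_⟩
      rw [sum_add_distrib, ← mul_sum, ← mul_sum, hδ.1.2]
      simp
      ring
    have hutil : ∀ i, util (u i) (fun x => (1 - t) * δ x + t * (if x = y then V else 0))
        = b t i := by
      intro i
      simp [util, b, add_mul, sum_add_distrib, mul_sum, mul_assoc]
    have hle := hδ.2 _ hdist
    simp only [nashProduct, hutil] at hle
    have hlog := Real.log_le_log
      (prod_pos fun i _ => Real.rpow_pos_of_pos (hb t h0 h1 i) (C i)) hle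
    rw [Real.log_prod fun i _ => (Real.rpow_pos_of_pos (hb t h0 h1 i) (C i)).ne',
      Real.log_prod fun i _ => (Real.rpow_pos_of_pos (ha i) (C i)).ne'] at hlog
    simp only [Real.log_rpow (hb t h0 h1 _), Real.log_rpow (ha _)] at hlog
    have hterm : ∀ i, t * (C i * ((V * u i y - util (u i) δ) / b t i))
        ≤ C i * Real.log (b t i) - C i * Real.log (util (u i) δ) := by
      intro i
      have hbi := hb t h0 h1 i
      have h := Real.log_le_sub_one_of_pos (div_pos (ha i) hbi)
      rw [Real.log_div (ha i).ne' hbi.ne'] at h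
      have e : t * ((V * u i y - util (u i) δ) / b t i) = 1 - util (u i) δ / b t i := by
        rw [eq_sub_iff_add_eq, mul_div_assoc', ← add_div, div_eq_one_iff_eq hbi.ne']
        simp only [b]
        ring
      calc t * (C i * ((V * u i y - util (u i) δ) / b t i))
          = C i * (t * ((V * u i y - util (u i) δ) / b t i)) := by ring
        _ ≤ C i * (Real.log (b t i) - Real.log (util (u i) δ)) := by
            rw [e]
            exact mul_le_mul_of_nonneg_left (by linarith) (hC i).le
        _ = _ := by ring
    have hsum := sum_le_sum fun i (_ : i ∈ univ) => hterm i
    rw [← mul_sum, sum_sub_distrib] at hsum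
    by_contra hneg
    have := mul_pos h0 (not_le.mp hneg)
    linarith
  have hb0 : ∀ i, b 0 i = util (u i) δ := fun i => by simp [b]
  have hcont : ContinuousAt
      (fun t => ∑ i, C i * ((V * u i y - util (u i) δ) / b t i)) 0 := by
    refine tendsto_finsetSum _ fun i _ => ?_
    refine ContinuousAt.mul continuousAt_const (ContinuousAt.div continuousAt_const ?_ ?_)
    · simp only [b]
      fun_prop
    · rw [hb0]
      exact (ha i).ne'
  have hlim := le_of_tendsto (hcont.tendsto.mono_left (nhdsWithin_le_nhds (s := Set.Ioi 0)))
    (Filter.eventually_of_mem (Ioo_mem_nhdsGT one_pos) fun t ht => key t ht.1 ht.2)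
  simp only [hb0] at hlim
  have e : ∑ i, C i * ((V * u i y - util (u i) δ) / util (u i) δ)
      = V * (∑ i, C i * u i y / util (u i) δ - 1) := by
    rw [mul_sub, mul_one, mul_sum]
    nth_rewrite 3 [hVdef]
    rw [← sum_sub_distrib]
    refine sum_congr rfl fun i _ => ?_
    have := (ha i).ne'
    field_simp
  rw [e] at hlim
  by_contra hneg
  have := mul_pos hV (sub_pos.mpr (not_le.mp hneg))
  linarith

theorem nash_decomposable {A N : Type*} [Fintype A] [Nonempty A] [Fintype N]
    (u : N → A → ℝ) (hu : ∀ i x, 0 ≤ u i x)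
    (C : N → ℝ) (hC : ∀ i, 0 < C i)
    (hacc : ∀ i, ∃ x, 0 < u i x)
    (δ : A → ℝ) (hδ : IsNashDistribution u C δ)
    (δi : N → A → ℝ) (hδi : ∀ i x, δi i x = C i * δ x * u i x / util (u i) δ) :
    (∀ i, (∀ x, 0 ≤ δi i x) ∧ (∑ x, δi i x) = C i ∧ (∀ x, 0 < δi i x → 0 < u i x)) ∧
      (∀ x, (∑ i, δi i x) = δ x) ∧
      Decomposable u C δ := by
  have ha := nash_util_pos hu hC hacc hδ
  have hnonneg : ∀ i x, 0 ≤ δi i x := fun i x => by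
    rw [hδi]
    exact div_nonneg (mul_nonneg (mul_nonneg (hC i).le (hδ.1.1 x)) (hu i x)) (ha i).le
  have hsum : ∀ i, ∑ x, δi i x = C i := fun i => by
    simp only [hδi, mul_assoc]
    rw [← sum_div, ← mul_sum]
    exact mul_div_cancel_right₀ _ (ha i).ne'
  have hsupp : ∀ i x, 0 < δi i x → 0 < u i x := fun i x h => by
    refine lt_of_le_of_ne (hu i x) fun h0 => h.ne' ?_
    rw [hδi, ← h0, mul_zero, zero_div]
  have hle : ∀ x, ∑ i, δi i x ≤ δ x := fun x => by
    calc ∑ i, δi i x = δ x * ∑ i, C i * u i x / util (u i) δ := by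
          rw [mul_sum]
          exact sum_congr rfl fun i _ => by rw [hδi]; ring
      _ ≤ δ x * 1 :=
          mul_le_mul_of_nonneg_left (nash_marginal_le_one hu hC hacc hδ x) (hδ.1.1 x)
      _ = δ x := mul_one _
  have htotal : ∑ x, ∑ i, δi i x = ∑ x, δ x := by
    rw [sum_comm, hδ.1.2]
    exact sum_congr rfl fun i _ => hsum i
  have hdec : ∀ x, ∑ i, δi i x = δ x := fun x =>
    (sum_eq_sum_iff_of_le fun x _ => hle x).mp htotal x (mem_univ x)
  exact ⟨fun i => ⟨hnonneg i, hsum i, hsupp i⟩, hdec,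
    δi, fun i => ⟨hnonneg i, hsum i⟩, fun x => (hdec x).symm, hsupp⟩
end

section
/- Suppose C is a contribution profile with C_i > 0 for all i ∈ N and every agent has at least one acceptable project, and suppose the Nash product has a unique maximizer δ* over Δ(|C|). Let δ⁰ ∈ Δ(|C|) satisfy δ⁰(x) > 0 for all x ∈ A, and define the sequence (δ^k) by δ^{k+1}(x) = Σ_{i∈N} C_i · (u_i(x)/u_i(δ^k)) · δ^k(x) for all x ∈ A. Then δ^k converges to δ* as k → ∞ (i.e., δ^k(x) → δ*(x) for every x ∈ A). -/
/-!
Write `W d x = ∑ i, C i * u i x / util (u i) d`, so that the dynamics is `δ (k+1) x = W (δ k) x * δ k x`,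
and let `F d = ∑ i, C i * log (util (u i) d)` be the logarithm of the Nash product (`growth` and
`logNash` below).

* One step of the dynamics raises `F` by at least `∑ x, d x * W d x * log (W d x)` (Jensen), which is
  positive unless `W d = 1` on the support of `d`, since `t * log t > t - 1` for `t ≠ 1` and
  `∑ x, d x * (W d x - 1) = 0`. A maximizer `δstar` therefore has `W δstar = 1` on its
  support (`weight_eq_one_of_isNash`); this replaces the usual first-order conditions.
* Hence for `x` in the support of `δstar` the numbers `C i * u i x / util (u i) δstar` are convex
  weights, and Jensen applied to `log (W (δ k) x)` shows that the potential
  `E k = ∑ x, δstar x * log (δ k x)` grows in each step by at least the gap `F δstar - F (δ k) ≥ 0`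
  (`gap_le_potential_step`).
* `E` is bounded above, so the gaps are summable and tend to `0`. Thus the Nash products
  of `δ k` tend to the maximum, every cluster point of `δ` in the compact set of distributions is a
  maximizer, and by uniqueness it is `δstar`.
-/

open Finset

open Filter Topology

/-- The growth factor of project `x` in one step of the dynamics started at `d`. -/
noncomputable def growth {A N : Type*} [Fintype A] [Fintype N]
    (u : N → A → ℝ) (C : N → ℝ) (d : A → ℝ) (x : A) : ℝ :=
  ∑ i, C i * (u i x / util (u i) d)

/-- The logarithm of the Nash product, for distributions giving every agent positive utility. -/
noncomputable def logNash {A N : Type*} [Fintype A] [Fintype N]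
    (u : N → A → ℝ) (C : N → ℝ) (d : A → ℝ) : ℝ :=
  ∑ i, C i * Real.log (util (u i) d)

/-- Jensen's inequality for `log`; values of weight zero need not be positive. -/
lemma sum_mul_log_le {ι : Type*} [Fintype ι] (p y : ι → ℝ) (hp : ∀ i, 0 ≤ p i)
    (hsum : ∑ i, p i = 1) (hy : ∀ i, 0 < p i → 0 < y i) :
    ∑ i, p i * Real.log (y i) ≤ Real.log (∑ i, p i * y i) := by
  set S := ∑ i, p i * y i with hS
  have hnn : ∀ i, 0 ≤ p i * y i := fun i => by
    rcases (hp i).eq_or_lt with h | h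
    · simp [← h]
    · exact (mul_pos h (hy i h)).le
  have hSpos : 0 < S := by
    obtain ⟨i, -, hi⟩ : ∃ i ∈ Finset.univ, 0 < p i := by
      apply Finset.exists_lt_of_sum_lt
      simp [hsum]
    exact Finset.sum_pos' (fun i _ => hnn i) ⟨i, Finset.mem_univ _, mul_pos hi (hy i hi)⟩
  have key : ∀ i, p i * Real.log (y i) ≤ p i * Real.log S + (p i * y i / S - p i) := fun i => by
    rcases (hp i).eq_or_lt with h | h
    · simp [← h]
    · have h1 := Real.log_le_sub_one_of_pos (div_pos (hy i h) hSpos)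
      rw [Real.log_div (hy i h).ne' hSpos.ne'] at h1
      have h2 := mul_le_mul_of_nonneg_left h1 h.le
      have h3 : p i * y i / S = p i * (y i / S) := by ring
      rw [h3]; linarith
  calc _ ≤ ∑ i, (p i * Real.log S + (p i * y i / S - p i)) := Finset.sum_le_sum fun i _ => key i
    _ = Real.log S := by
      rw [Finset.sum_add_distrib, Finset.sum_sub_distrib, ← Finset.sum_mul, ← Finset.sum_div, hsum,
        ← hS, div_self hSpos.ne']
      ring

lemma sub_one_le_mul_log {t : ℝ} (ht : 0 ≤ t) : t - 1 ≤ t * Real.log t := by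
  rcases ht.eq_or_lt with h | h
  · simp [← h]
  · have h1 := Real.one_sub_inv_le_log_of_pos h
    have h2 := mul_le_mul_of_nonneg_left h1 h.le
    rwa [mul_sub, mul_inv_cancel₀ h.ne', mul_one] at h2

lemma sub_one_lt_mul_log {t : ℝ} (ht : 0 ≤ t) (h1 : t ≠ 1) : t - 1 < t * Real.log t := by
  rcases ht.eq_or_lt with h | h
  · simp [← h]
  · have h2 := Real.log_lt_sub_one_of_pos (inv_pos.2 h) (by simpa using h1)
    rw [Real.log_inv] at h2
    have h3 := mul_lt_mul_of_pos_left h2 h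
    rw [mul_sub, mul_inv_cancel₀ h.ne', mul_one] at h3
    linarith

section
variable {A N : Type*} [Fintype A] [Fintype N] {u : N → A → ℝ} {C : N → ℝ}

lemma nashProduct_eq_exp {d : A → ℝ} (hd : ∀ i, 0 < util (u i) d) :
    nashProduct u C d = Real.exp (logNash u C d) := by
  unfold nashProduct logNash
  rw [Real.exp_sum]
  refine Finset.prod_congr rfl fun i _ => ?_
  rw [Real.rpow_def_of_pos (hd i), mul_comm]

lemma growth_nonneg (hu : ∀ i x, 0 ≤ u i x) (hC : ∀ i, 0 < C i) {d : A → ℝ}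
    (hd : ∀ i, 0 < util (u i) d) (x : A) : 0 ≤ growth u C d x :=
  Finset.sum_nonneg fun i _ => mul_nonneg (hC i).le (div_nonneg (hu i x) (hd i).le)

lemma growth_pos (hu : ∀ i x, 0 ≤ u i x) (hC : ∀ i, 0 < C i) {d : A → ℝ}
    (hd : ∀ i, 0 < util (u i) d) {x : A} {i : N} (hi : 0 < u i x) : 0 < growth u C d x :=
  Finset.sum_pos' (fun i _ => mul_nonneg (hC i).le (div_nonneg (hu i x) (hd i).le))
    ⟨i, Finset.mem_univ _, mul_pos (hC i) (div_pos hi (hd i))⟩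

/-- Summing over projects first collapses the double sum, because `∑ x, d x * u i x = util (u i) d`. -/
lemma sum_weight {d : A → ℝ} (hd : ∀ i, 0 < util (u i) d) (f : N → ℝ) :
    ∑ x, d x * ∑ i, C i * (u i x / util (u i) d) * f i = ∑ i, C i * f i := by
  simp_rw [Finset.mul_sum]
  rw [Finset.sum_comm]
  refine Finset.sum_congr rfl fun i _ => ?_
  have h : ∀ x, d x * (C i * (u i x / util (u i) d) * f i) =
      (d x * u i x) * (C i * f i / util (u i) d) := fun x => by ring
  simp_rw [h]
  rw [← Finset.sum_mul]
  change util (u i) d * _ = _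
  rw [mul_div_cancel₀ _ (hd i).ne']

lemma sum_mul_growth {d : A → ℝ} (hd : ∀ i, 0 < util (u i) d) :
    ∑ x, d x * growth u C d x = ∑ i, C i := by
  simpa [growth] using sum_weight (C := C) hd (fun _ => 1)

lemma util_step_pos (hu : ∀ i x, 0 ≤ u i x) (hC : ∀ i, 0 < C i) {d : A → ℝ}
    (hd0 : ∀ x, 0 ≤ d x) (hd : ∀ i, 0 < util (u i) d) (i : N) :
    0 < util (u i) (fun x => d x * growth u C d x) := by
  obtain ⟨x, -, hx⟩ : ∃ x ∈ Finset.univ, 0 < d x * u i x := by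
    apply Finset.exists_lt_of_sum_lt
    simpa [util] using hd i
  have hux : 0 < u i x := pos_of_mul_pos_right hx (hd0 x)
  refine Finset.sum_pos' (fun x _ => mul_nonneg (mul_nonneg (hd0 x) (growth_nonneg hu hC hd x))
    (hu i x)) ⟨x, Finset.mem_univ _, ?_⟩
  exact mul_pos (mul_pos (pos_of_mul_pos_left hx hux.le) (growth_pos hu hC hd hux)) hux

/-- Lower bound on the increase of `logNash` in one step of the dynamics. -/
lemma logNash_step (hu : ∀ i x, 0 ≤ u i x) (hC : ∀ i, 0 < C i) {d : A → ℝ}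
    (hd0 : ∀ x, 0 ≤ d x) (hd : ∀ i, 0 < util (u i) d) :
    logNash u C d + ∑ x, d x * (growth u C d x * Real.log (growth u C d x)) ≤
      logNash u C (fun x => d x * growth u C d x) := by
  have key : ∀ i, ∑ x, (d x * u i x / util (u i) d) * Real.log (growth u C d x) ≤
      Real.log (util (u i) (fun x => d x * growth u C d x)) - Real.log (util (u i) d) := fun i => by
    rw [← Real.log_div (util_step_pos hu hC hd0 hd i).ne' (hd i).ne']
    have h := sum_mul_log_le (fun x => d x * u i x / util (u i) d) (growth u C d)
      (fun x => div_nonneg (mul_nonneg (hd0 x) (hu i x)) (hd i).le)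
      (by rw [← Finset.sum_div]; exact div_self (hd i).ne')
      (fun x hx => by
        refine growth_pos hu hC hd (i := i) ((hu i x).lt_of_ne' fun h => ?_)
        simp [h] at hx)
    refine h.trans_eq ?_
    congr 1
    unfold util
    rw [Finset.sum_div]
    exact Finset.sum_congr rfl fun x _ => by ring
  have h2 : ∑ x, d x * (growth u C d x * Real.log (growth u C d x)) =
      ∑ i, C i * ∑ x, (d x * u i x / util (u i) d) * Real.log (growth u C d x) := by
    simp_rw [Finset.mul_sum]
    rw [Finset.sum_comm]
    refine Finset.sum_congr rfl fun x _ => ?_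
    conv_lhs => rw [growth, Finset.sum_mul, Finset.mul_sum]
    exact Finset.sum_congr rfl fun i _ => by rw [growth]; ring
  rw [h2, logNash, logNash, ← Finset.sum_add_distrib]
  refine Finset.sum_le_sum fun i _ => ?_
  have := mul_le_mul_of_nonneg_left (key i) (hC i).le
  linarith

lemma weight_eq_one_of_isNash (hu : ∀ i x, 0 ≤ u i x) (hC : ∀ i, 0 < C i) {d : A → ℝ}
    (hn : IsNashDistribution u C d) (hd : ∀ i, 0 < util (u i) d) {x : A} (hx : 0 < d x) :
    growth u C d x = 1 := by
  by_contra hne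
  have hd0 := hn.1.1
  have hg := growth_nonneg hu hC hd
  have hmax := hn.2 (fun x => d x * growth u C d x)
    ⟨fun x => mul_nonneg (hd0 x) (hg x), sum_mul_growth hd⟩
  rw [nashProduct_eq_exp hd, nashProduct_eq_exp (util_step_pos hu hC hd0 hd), Real.exp_le_exp]
    at hmax
  have hstep := logNash_step hu hC hd0 hd
  have hlt : ∑ x, d x * (growth u C d x - 1) <
      ∑ x, d x * (growth u C d x * Real.log (growth u C d x)) :=
    Finset.sum_lt_sum
      (fun y _ => mul_le_mul_of_nonneg_left (sub_one_le_mul_log (hg y)) (hd0 y))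
      ⟨x, Finset.mem_univ _, mul_lt_mul_of_pos_left (sub_one_lt_mul_log (hg x) hne) hx⟩
  have hzero : ∑ x, d x * (growth u C d x - 1) = 0 := by
    simp_rw [mul_sub, mul_one]
    rw [Finset.sum_sub_distrib, sum_mul_growth hd, hn.1.2, sub_self]
  linarith

/-- The potential `∑ x, s x * log (d x)` of a maximizer `s` grows in one step, started at `d`,
by at least the optimality gap of `d`. -/
lemma gap_le_potential_step (hu : ∀ i x, 0 ≤ u i x) (hC : ∀ i, 0 < C i) {s d : A → ℝ}
    (hn : IsNashDistribution u C s) (hs : ∀ i, 0 < util (u i) s) (hd : ∀ i, 0 < util (u i) d) :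
    logNash u C s - logNash u C d ≤ ∑ x, s x * Real.log (growth u C d x) := by
  have h1 : logNash u C s - logNash u C d =
      ∑ x, s x * ∑ i, C i * (u i x / util (u i) s) *
        Real.log (util (u i) s / util (u i) d) := by
    rw [sum_weight hs, logNash, logNash, ← Finset.sum_sub_distrib]
    exact Finset.sum_congr rfl fun i _ => by rw [Real.log_div (hs i).ne' (hd i).ne']; ring
  rw [h1]
  refine Finset.sum_le_sum fun x _ => ?_
  rcases (hn.1.1 x).eq_or_lt with h | h
  · simp [← h]
  refine mul_le_mul_of_nonneg_left ?_ h.le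
  refine (sum_mul_log_le (fun i => C i * (u i x / util (u i) s))
    (fun i => util (u i) s / util (u i) d)
    (fun i => mul_nonneg (hC i).le (div_nonneg (hu i x) (hs i).le))
    (weight_eq_one_of_isNash hu hC hn hs h) (fun i _ => div_pos (hs i) (hd i))).trans_eq ?_
  congr 1
  refine Finset.sum_congr rfl fun i _ => ?_
  rw [mul_assoc, div_mul_div_cancel₀ (hs i).ne']

lemma continuous_nashProduct (hC : ∀ i, 0 < C i) : Continuous (nashProduct u C) := by
  unfold nashProduct util
  refine continuous_finsetProd _ fun i _ => ?_
  exact Continuous.rpow_const (by fun_prop) fun _ => Or.inr (hC i).le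

lemma isCompact_distributions (V : ℝ) : IsCompact {d : A → ℝ | IsDistribution d V} := by
  refine IsCompact.of_isClosed_subset (isCompact_univ_pi fun _ : A => isCompact_Icc (a := 0) (b := V))
    ?_ ?_
  · have h : {d : A → ℝ | IsDistribution d V} =
        (⋂ x, {d : A → ℝ | 0 ≤ d x}) ∩ {d | ∑ x, d x = V} := by
      ext d; simp [IsDistribution]
    rw [h]
    exact (isClosed_iInter fun x => isClosed_le continuous_const (continuous_apply x)).inter
      (isClosed_eq (by fun_prop) continuous_const)
  · rintro d ⟨hd0, hd⟩ x -
    exact ⟨hd0 x, hd ▸ Finset.single_le_sum (fun y _ => hd0 y) (Finset.mem_univ x)⟩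

end

theorem nash_dynamics_converges_of_unique {A N : Type*}
    [Fintype A] [Nonempty A] [Fintype N]
    (u : N → A → ℝ) (hu : ∀ i x, 0 ≤ u i x)
    (C : N → ℝ) (hC : ∀ i, 0 < C i)
    (hacc : ∀ i, ∃ x, 0 < u i x)
    (δstar : A → ℝ) (hstar : IsNashDistribution u C δstar)
    (huniq : ∀ d : A → ℝ, IsNashDistribution u C d → d = δstar)
    (δ : ℕ → A → ℝ)
    (h0 : IsDistribution (δ 0) (∑ i, C i)) (h0pos : ∀ x, 0 < δ 0 x)
    (hrec : ∀ k x, δ (k + 1) x = ∑ i, C i * (u i x / util (u i) (δ k)) * δ k x) :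
    ∀ x, Tendsto (fun k => δ k x) atTop (𝓝 (δstar x)) := by
  have hrec' : ∀ k x, δ (k + 1) x = δ k x * growth u C (δ k) x := fun k x => by
    rw [hrec, growth, ← Finset.sum_mul, mul_comm]
  -- Projects acceptable to nobody vanish after one step; all others stay funded forever.
  have hutil_of : ∀ d : A → ℝ, (∀ x, 0 ≤ d x) → (∀ i x, 0 < u i x → 0 < d x) →
      ∀ i, 0 < util (u i) d := fun d hd hpos i => by
    obtain ⟨x, hx⟩ := hacc i
    exact Finset.sum_pos' (fun y _ => mul_nonneg (hd y) (hu i y))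
      ⟨x, Finset.mem_univ _, mul_pos (hpos i x hx) hx⟩
  have hinv : ∀ k, IsDistribution (δ k) (∑ i, C i) ∧ ∀ i x, 0 < u i x → 0 < δ k x := fun k => by
    induction k with
    | zero => exact ⟨h0, fun _ x _ => h0pos x⟩
    | succ k ih =>
      obtain ⟨⟨hk0, hks⟩, hkpos⟩ := ih
      have hk := hutil_of _ hk0 hkpos
      refine ⟨⟨fun x => ?_, ?_⟩, fun i x hx => ?_⟩
      · rw [hrec']; exact mul_nonneg (hk0 x) (growth_nonneg hu hC hk x)
      · simp_rw [hrec']; exact sum_mul_growth hk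
      · rw [hrec']; exact mul_pos (hkpos i x hx) (growth_pos hu hC hk hx)
  have hk : ∀ k i, 0 < util (u i) (δ k) := fun k => hutil_of _ (hinv k).1.1 (hinv k).2
  have hs : ∀ i, 0 < util (u i) δstar := fun i => by
    have hpos : 0 < nashProduct u C δstar :=
      lt_of_lt_of_le (by rw [nashProduct_eq_exp (hk 0)]; exact Real.exp_pos _) (hstar.2 _ h0)
    have hnn : 0 ≤ util (u i) δstar :=
      Finset.sum_nonneg fun x _ => mul_nonneg (hstar.1.1 x) (hu i x)
    refine hnn.lt_of_ne' fun h => hpos.ne' ?_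
    exact Finset.prod_eq_zero (Finset.mem_univ i) (by rw [h, Real.zero_rpow (hC i).ne'])
  have hsupp : ∀ x, 0 < δstar x → ∃ i, 0 < u i x := fun x hx => by
    by_contra! hno
    have h1 := weight_eq_one_of_isNash hu hC hstar hs hx
    simp [growth, fun i => le_antisymm (hno i) (hu i x)] at h1
  set g : ℕ → ℝ := fun k => logNash u C δstar - logNash u C (δ k) with hg
  have hg0 : ∀ k, 0 ≤ g k := fun k => by
    have h := hstar.2 _ (hinv k).1
    rw [nashProduct_eq_exp (hk k), nashProduct_eq_exp hs, Real.exp_le_exp] at h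
    exact sub_nonneg.2 h
  set E : ℕ → ℝ := fun k => ∑ x, δstar x * Real.log (δ k x) with hE
  have hEstep : ∀ k, g k ≤ E (k + 1) - E k := fun k => by
    refine (gap_le_potential_step hu hC hstar hs (hk k)).trans_eq ?_
    rw [hE, ← Finset.sum_sub_distrib]
    refine Finset.sum_congr rfl fun x _ => ?_
    rcases (hstar.1.1 x).eq_or_lt with h | h
    · simp [← h]
    · obtain ⟨i, hi⟩ := hsupp x h
      rw [hrec', Real.log_mul ((hinv k).2 i x hi).ne' (growth_pos hu hC (hk k) hi).ne']
      ring
  have hEbd : ∀ k, E k ≤ ∑ x, δstar x * ∑ i, C i := fun k => by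
    refine Finset.sum_le_sum fun x _ => mul_le_mul_of_nonneg_left ?_ (hstar.1.1 x)
    refine (Real.log_le_self ((hinv k).1.1 x)).trans ?_
    rw [← (hinv k).1.2]
    exact Finset.single_le_sum (fun y _ => (hinv k).1.1 y) (Finset.mem_univ x)
  have hgsum : Summable g := by
    refine summable_of_sum_range_le (c := (∑ x, δstar x * ∑ i, C i) - E 0) hg0 fun n => ?_
    calc _ ≤ ∑ k ∈ Finset.range n, (E (k + 1) - E k) := Finset.sum_le_sum fun k _ => hEstep k
      _ = E n - E 0 := Finset.sum_range_sub E n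
      _ ≤ _ := by linarith [hEbd n]
  have hlog : Tendsto (fun k => logNash u C (δ k)) atTop (𝓝 (logNash u C δstar)) := by
    have h := hgsum.tendsto_atTop_zero.const_sub (logNash u C δstar)
    simpa [hg] using h
  have hnash : Tendsto (fun k => nashProduct u C (δ k)) atTop (𝓝 (nashProduct u C δstar)) := by
    rw [nashProduct_eq_exp hs]
    simp_rw [fun k => nashProduct_eq_exp (C := C) (hk k)]
    exact (Real.continuous_exp.tendsto _).comp hlog
  have hconv : Tendsto δ atTop (𝓝 δstar) := by
    refine (isCompact_distributions (∑ i, C i)).tendsto_nhds_of_unique_mapClusterPt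
      (Eventually.of_forall fun k => (hinv k).1) fun d hd hcl => huniq d ⟨hd, fun d' hd' => ?_⟩
    obtain ⟨φ, hφ, hlim⟩ := hcl.tendsto_subseq
    have heq : nashProduct u C d = nashProduct u C δstar :=
      tendsto_nhds_unique (((continuous_nashProduct hC).tendsto d).comp hlim)
        (hnash.comp hφ.tendsto_atTop)
    rw [heq]
    exact hstar.2 d' hd'
  exact fun x => (tendsto_pi_nhds.1 hconv) x
end
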